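/- Assume A is standardized. Let x ∈ range(Aᵀ) with Ax ≠ b, let i ∈ {1,…,m} be an index maximizing |A^{(i)}x − b_i|, and set x⁺ = x − (A^{(i)}x − b_i)·(A^{(i)})ᵀ. Then ‖x⁺ − x⋆‖₂² ≤ (1 − λ_min⁺(AᵀA) · ‖Ax − b‖_∞² / ‖Ax − b‖₂²) · ‖x − x⋆‖₂². -/

import Mathlib

open Matrix Finset

/-- The largest eigenvalue of a square real matrix (as the supremum of its
eigenvalue set). -/
noncomputable def maxEig {k : ℕ} (M : Matrix (Fin k) (Fin k) ℝ) : ℝ :=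
  sSup {μ : ℝ | Module.End.HasEigenvalue (Matrix.mulVecLin M) μ}

/-- The smallest positive eigenvalue of a square real matrix. -/
noncomputable def minPosEig {k : ℕ} (M : Matrix (Fin k) (Fin k) ℝ) : ℝ :=
  sInf {μ : ℝ | Module.End.HasEigenvalue (Matrix.mulVecLin M) μ ∧ 0 < μ}

/-- The restriction of `A` to the rows indexed by `I`. -/
def rowSub {m n : ℕ} (A : Matrix (Fin m) (Fin n) ℝ) (I : Finset (Fin m)) :
    Matrix {i : Fin m // i ∈ I} (Fin n) ℝ :=
  fun i j => A i.1 j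

/-- Squared Euclidean norm. -/
noncomputable def sqNorm {k : ℕ} (v : Fin k → ℝ) : ℝ := ∑ j, (v j) ^ 2

/-- `xp` is the exact block Kaczmarz update of `x` with respect to the row
index set `I`: it satisfies the equations indexed by `I` and minimizes the
distance to `x` among all such points (hence is the orthogonal projection of
`x` onto the affine solution set, which is the unique such minimizer). -/
def IsKaczmarzUpdate {m n : ℕ} (A : Matrix (Fin m) (Fin n) ℝ)
    (b : Fin m → ℝ) (I : Finset (Fin m)) (x xp : Fin n → ℝ) : Prop :=
  (∀ i ∈ I, A i ⬝ᵥ xp = b i) ∧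
  ∀ y : Fin n → ℝ, (∀ i ∈ I, A i ⬝ᵥ y = b i) → sqNorm (xp - x) ≤ sqNorm (y - x)

/-- `I` is a greedy `δ`-subset of `τ` for `x`: `I ⊆ τ`, `|I| = δ`, and the
residual entries on `I` dominate (in absolute value) those on `τ \ I`. -/
def IsGreedySubset {m n : ℕ} (A : Matrix (Fin m) (Fin n) ℝ) (b : Fin m → ℝ)
    (x : Fin n → ℝ) (δ : ℕ) (τ I : Finset (Fin m)) : Prop :=
  I ⊆ τ ∧ I.card = δ ∧
    ∀ i ∈ I, ∀ j ∈ τ \ I, |A j ⬝ᵥ x - b j| ≤ |A i ⬝ᵥ x - b i|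

theorem sqNorm_eq_dotProduct {k : ℕ} (v : Fin k → ℝ) : sqNorm v = v ⬝ᵥ v := by
  simp [sqNorm, dotProduct, sq]

theorem sqNorm_mulVec {m n : ℕ} (A : Matrix (Fin m) (Fin n) ℝ) (v : Fin n → ℝ) :
    sqNorm (A *ᵥ v) = v ⬝ᵥ (Aᵀ * A) *ᵥ v := by
  rw [sqNorm_eq_dotProduct, ← mulVec_mulVec, dotProduct_mulVec v, vecMul_transpose]

/-- Parseval's identity for an orthonormal basis, in terms of the dot product. -/
theorem OrthonormalBasis.sum_dotProduct_mul_dotProduct {k : ℕ}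
    (B : OrthonormalBasis (Fin k) ℝ (EuclideanSpace ℝ (Fin k))) (u v : Fin k → ℝ) :
    ∑ j, (u ⬝ᵥ B j) * (v ⬝ᵥ B j) = u ⬝ᵥ v := by
  have h := B.sum_inner_mul_inner (WithLp.toLp 2 u) (WithLp.toLp 2 v)
  simp only [EuclideanSpace.inner_eq_star_dotProduct, star_trivial] at h
  rw [dotProduct_comm u v, ← h]
  exact sum_congr rfl fun j _ => by rw [dotProduct_comm u]

theorem minPosEig_le {k : ℕ} {M : Matrix (Fin k) (Fin k) ℝ} {μ : ℝ} (hμ : 0 < μ)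
    {v : Fin k → ℝ} (hv : v ≠ 0) (h : M *ᵥ v = μ • v) : minPosEig M ≤ μ :=
  csInf_le ⟨0, fun _ hν => hν.2.le⟩
    ⟨Module.End.hasEigenvalue_of_hasEigenvector
      (Module.End.hasEigenvector_iff.2 ⟨Module.End.mem_eigenspace_iff.2 h, hv⟩), hμ⟩

/-- On the row space of `A`, the smallest positive eigenvalue of `Aᵀ * A` is a lower bound for the
Rayleigh quotient of `Aᵀ * A`. -/
theorem minPosEig_mul_sqNorm_le {m n : ℕ} (A : Matrix (Fin m) (Fin n) ℝ) {e : Fin n → ℝ}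
    (he : e ∈ Set.range Aᵀ.mulVec) :
    minPosEig (Aᵀ * A) * sqNorm e ≤ sqNorm (A *ᵥ e) := by
  have hM : (Aᵀ * A).IsHermitian := by
    simpa using isHermitian_conjTranspose_mul_self A
  set B := hM.eigenvectorBasis
  have hvec (j) : (Aᵀ * A) *ᵥ (B j) = hM.eigenvalues j • (B j : Fin n → ℝ) :=
    hM.mulVec_eigenvectorBasis j
  have hsq (j) : sqNorm (A *ᵥ (B j)) = hM.eigenvalues j * sqNorm (B j) := by
    rw [sqNorm_mulVec, hvec, dotProduct_smul, sqNorm_eq_dotProduct, smul_eq_mul]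
  have hne (j) : (B j : Fin n → ℝ) ≠ 0 := fun h =>
    B.orthonormal.ne_zero j (by ext t; exact congrFun h t)
  have hpos (j) : 0 < sqNorm (B j) := by
    rw [sqNorm_eq_dotProduct]
    simpa using dotProduct_star_self_pos_iff.2 (hne j)
  have hcoef (j) : ((Aᵀ * A) *ᵥ e) ⬝ᵥ (B j) = hM.eigenvalues j * (e ⬝ᵥ (B j)) := by
    rw [← smul_eq_mul, ← dotProduct_smul, ← hvec, dotProduct_mulVec, ← mulVec_transpose,
      transpose_mul, transpose_transpose]
  rw [sqNorm_mulVec, sqNorm_eq_dotProduct, ← B.sum_dotProduct_mul_dotProduct e e,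
    ← B.sum_dotProduct_mul_dotProduct e, mul_sum]
  refine sum_le_sum fun j _ => ?_
  have hnn : 0 ≤ hM.eigenvalues j := by
    have h : 0 ≤ sqNorm (A *ᵥ (B j)) := sum_nonneg fun _ _ => sq_nonneg _
    rw [hsq] at h
    exact nonneg_of_mul_nonneg_left h (hpos j)
  rw [hcoef]
  rcases hnn.eq_or_lt with h0 | h0
  · have hAB : A *ᵥ (B j) = 0 := by
      have h := hsq j
      rwa [← h0, zero_mul, sqNorm_eq_dotProduct, dotProduct_self_eq_zero] at h
    obtain ⟨w, rfl⟩ := he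
    have : (Aᵀ *ᵥ w) ⬝ᵥ (B j) = 0 := by
      rw [mulVec_transpose, ← dotProduct_mulVec, hAB, dotProduct_zero]
    simp [this]
  · nlinarith [mul_le_mul_of_nonneg_right (minPosEig_le h0 (hne j) (hvec j))
      (mul_self_nonneg (e ⬝ᵥ (B j)))]

/-- Projecting along a unit vector `a` decreases the squared norm by the squared component. -/
theorem sqNorm_sub_dotProduct_smul {k : ℕ} {a : Fin k → ℝ} (ha : sqNorm a = 1) (e : Fin k → ℝ) :
    sqNorm (e - (a ⬝ᵥ e) • a) = sqNorm e - (a ⬝ᵥ e) ^ 2 := by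
  rw [sqNorm_eq_dotProduct] at ha
  simp only [sqNorm_eq_dotProduct, sub_dotProduct, dotProduct_sub, smul_dotProduct,
    dotProduct_smul, smul_eq_mul, ha, dotProduct_comm e a]
  ring

theorem motzkin_one_step {m n : ℕ}
    (A : Matrix (Fin m) (Fin n) ℝ) (hA : A ≠ 0)
    (hstd : ∀ i : Fin m, ∑ j, (A i j) ^ 2 = 1)
    (b : Fin m → ℝ)
    (xstar : Fin n → ℝ) (hconsistent : A.mulVec xstar = b)
    (hxstar : xstar ∈ Set.range Aᵀ.mulVec)
    (x : Fin n → ℝ) (hx : x ∈ Set.range Aᵀ.mulVec)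
    (hres : A.mulVec x ≠ b)
    (i : Fin m) (hi : ∀ j : Fin m, |A j ⬝ᵥ x - b j| ≤ |A i ⬝ᵥ x - b i|)
    (xp : Fin n → ℝ)
    (hxp : xp = fun j => x j - (A i ⬝ᵥ x - b i) * A i j) :
    sqNorm (xp - xstar) ≤
      (1 - minPosEig (Aᵀ * A) *
          (sSup (Set.range fun j : Fin m => |A.mulVec x j - b j|)) ^ 2 /
            sqNorm (A.mulVec x - b)) *
        sqNorm (x - xstar) := by
  have hsup : sSup (Set.range fun j : Fin m => |A.mulVec x j - b j|) = |A i ⬝ᵥ x - b i| :=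
    IsGreatest.csSup_eq ⟨⟨i, rfl⟩, by rintro _ ⟨j, rfl⟩; exact hi j⟩
  have hrow : A i ⬝ᵥ x - b i = A i ⬝ᵥ (x - xstar) := by
    rw [dotProduct_sub, ← hconsistent]; rfl
  have hresid : A *ᵥ x - b = A *ᵥ (x - xstar) := by rw [mulVec_sub, hconsistent]
  have hstep : xp - xstar = (x - xstar) - (A i ⬝ᵥ (x - xstar)) • A i := by
    rw [hxp, ← hrow]; ext j; simp; ring
  have hmem : x - xstar ∈ Set.range Aᵀ.mulVec := by
    obtain ⟨u, rfl⟩ := hx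
    obtain ⟨w, rfl⟩ := hxstar
    exact ⟨u - w, mulVec_sub _ _ _⟩
  have hpos : 0 < sqNorm (A *ᵥ (x - xstar)) := by
    rw [← hresid, sqNorm_eq_dotProduct]
    simpa using dotProduct_star_self_pos_iff.2 (sub_ne_zero.2 hres)
  rw [hsup, sq_abs, hrow, hresid, hstep, sqNorm_sub_dotProduct_smul (hstd i), sub_mul, one_mul]
  refine sub_le_sub_left ?_ _
  rw [div_mul_eq_mul_div, div_le_iff₀ hpos]
  nlinarith [mul_le_mul_of_nonneg_left (minPosEig_mul_sqNorm_le A hmem)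
    (sq_nonneg (A i ⬝ᵥ (x - xstar)))]
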